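/- Let ℓ ≥ 1 and 0 ≤ m ≤ n. Then g_{ℓ,n}^m equals the number of colored permutations π ∈ G_{ℓ,n} whose fixed points are all contained in [m] = {1,…,m}. -/

import Mathlib

/-- A colored permutation in `G_{ℓ,n} = C_ℓ ≀ S_n`: a pair `(ε, σ)` where
`ε : [n] → Z/ℓZ` assigns colors and `σ` is a permutation of `[n]`.
We model `[n] = {1,…,n}` by `Fin n`, where `i : Fin n` represents the integer `i + 1`. -/
abbrev ColoredPerm (ℓ n : ℕ) := (Fin n → ZMod ℓ) × Equiv.Perm (Fin n)

def extendPerm {n : ℕ} (p : Fin (n + 1)) (σ : Equiv.Perm (Fin n)) : Equiv.Perm (Fin (n + 1)) :=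
  ((finSuccEquiv' p).trans (Equiv.optionCongr σ)).trans (finSuccEquiv' p).symm

theorem extendPerm_self {n : ℕ} (p : Fin (n + 1)) (σ : Equiv.Perm (Fin n)) :
    extendPerm p σ p = p := by
  simp [extendPerm]

theorem extendPerm_succAbove {n : ℕ} (p : Fin (n + 1)) (σ : Equiv.Perm (Fin n)) (j : Fin n) :
    extendPerm p σ (p.succAbove j) = p.succAbove (σ j) := by
  simp [extendPerm]

theorem extendPerm_surj {n : ℕ} (p : Fin (n + 1)) (τ : Equiv.Perm (Fin (n + 1)))
    (h : τ p = p) : ∃ σ, extendPerm p σ = τ := by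
  let e : Equiv.Perm (Option (Fin n)) := ((finSuccEquiv' p).symm.trans τ).trans (finSuccEquiv' p)
  have he : e none = none := by simp [e, h]
  have h1 := Equiv.Perm.decomposeOption.symm_apply_apply e
  refine ⟨Equiv.removeNone e, ?_⟩
  have h2 : Equiv.optionCongr (Equiv.removeNone e) = e := by
    have h3 : Equiv.Perm.decomposeOption e = (none, Equiv.removeNone e) := by
      rw [Equiv.Perm.decomposeOption_apply, he]
    rw [h3, Equiv.Perm.decomposeOption_symm_apply, Equiv.swap_self] at h1
    exact h1
  unfold extendPerm
  rw [h2]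
  ext i
  simp [e]

theorem succAbove_lt {n m : ℕ} (hm : m < n + 1) (j : Fin n) :
    (((⟨m, hm⟩ : Fin (n + 1)).succAbove j : Fin (n + 1)) : ℕ) < m + 1 ↔ (j : ℕ) < m := by
  simp only [Fin.succAbove, Fin.lt_def, Fin.val_castSucc]
  split_ifs with h <;> simp <;> omega

abbrev Good (ℓ n m : ℕ) (π : ColoredPerm ℓ n) : Prop :=
  ∀ i : Fin n, (π.2 i = i ∧ π.1 i = 0) → (i : ℕ) < m

theorem card_fixed (ℓ n m : ℕ) (hm : m < n + 1) :
    Nat.card {π : ColoredPerm ℓ n // Good ℓ n m π} =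
    Nat.card {π : ColoredPerm ℓ (n + 1) // Good ℓ (n + 1) (m + 1) π ∧
      (π.2 ⟨m, hm⟩ = ⟨m, hm⟩ ∧ π.1 ⟨m, hm⟩ = 0)} := by
  let p : Fin (n + 1) := ⟨m, hm⟩
  let f : {π : ColoredPerm ℓ n // Good ℓ n m π} →
    {π : ColoredPerm ℓ (n + 1) // Good ℓ (n + 1) (m + 1) π ∧
      (π.2 p = p ∧ π.1 p = 0)} := fun π =>
    ⟨(p.insertNth (α := fun _ => ZMod ℓ) 0 π.1.1, extendPerm p π.1.2), by
      refine ⟨?_, extendPerm_self _ _, by simp⟩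
      intro i hi
      rcases Fin.eq_self_or_eq_succAbove p i with rfl | ⟨j, rfl⟩
      · simp [p]
      · rw [succAbove_lt]
        apply π.2
        simpa [extendPerm_succAbove] using hi⟩
  apply Nat.card_eq_of_bijective f
  constructor
  · rintro ⟨⟨a, σ⟩, h⟩ ⟨⟨b, τ⟩, h'⟩ heq
    simp only [f, Subtype.mk.injEq, Prod.mk.injEq] at heq ⊢
    obtain ⟨h1, h2⟩ := heq
    constructor
    · funext j
      have := congrFun h1 (p.succAbove j)
      simpa using this
    · ext j
      have := congrArg (fun s => s (p.succAbove j)) h2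
      simp only [extendPerm_succAbove] at this
      rw [Fin.succAbove_right_injective this]
  · rintro ⟨⟨a, τ⟩, h, h1, h2⟩
    obtain ⟨σ, rfl⟩ := extendPerm_surj p τ h1
    refine ⟨⟨(fun j => a (p.succAbove j), σ), ?_⟩, ?_⟩
    · rintro j ⟨hj1, hj2⟩
      rw [← succAbove_lt hm]
      apply h
      exact ⟨by rw [extendPerm_succAbove]; exact congrArg _ hj1, hj2⟩
    · simp only [f, Subtype.mk.injEq, Prod.mk.injEq, and_true]
      funext i
      rcases Fin.eq_self_or_eq_succAbove p i with rfl | ⟨j, rfl⟩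
      · simpa using h2.symm
      · simp

theorem card_rec (ℓ n m : ℕ) (hℓ : 1 ≤ ℓ) (hm : m < n + 1) :
    Nat.card {π : ColoredPerm ℓ (n + 1) // Good ℓ (n + 1) (m + 1) π} =
    Nat.card {π : ColoredPerm ℓ (n + 1) // Good ℓ (n + 1) m π} +
    Nat.card {π : ColoredPerm ℓ n // Good ℓ n m π} := by
  haveI : NeZero ℓ := ⟨by omega⟩
  classical
  rw [card_fixed ℓ n m hm]
  simp only [Nat.card_eq_fintype_card]
  rw [← Fintype.card_subtype_or_disjoint]
  · refine Fintype.card_congr (Equiv.subtypeEquivRight fun π => ?_)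
    constructor
    · intro h
      by_cases hp : π.2 ⟨m, hm⟩ = ⟨m, hm⟩ ∧ π.1 ⟨m, hm⟩ = 0
      · exact Or.inr ⟨h, hp⟩
      · left
        intro i hi
        have h1 := h i hi
        have h2 : (i : ℕ) ≠ m := by
          rintro rfl
          exact hp hi
        omega
    · rintro (h | h)
      · intro i hi
        have := h i hi
        omega
      · exact h.1
  · rw [Pi.disjoint_iff]
    intro π
    rw [Prop.disjoint_iff]
    intro hc
    have := hc.1 _ hc.2.2
    simp at this

/-- for `0 ≤ m ≤ n`, the entry `g_{ℓ,n}^m` equals the number of colored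
permutations `π = (ε, σ)` whose fixed points (indices `i` with `σ i = i` and `ε i = 0`)
are all contained in `[m]` (i.e. `(i : ℕ) < m` in the 0-indexed model). -/
theorem stmt_1 (ℓ : ℕ) (hℓ : 1 ≤ ℓ) (g : ℕ → ℕ → ℤ)
    (hg_diag : ∀ n : ℕ, g n n = (ℓ : ℤ) ^ n * (Nat.factorial n : ℤ))
    (hg_rec : ∀ n m : ℕ, m < n → g n m = g n (m + 1) - g (n - 1) m)
    (m n : ℕ) (hmn : m ≤ n) :
    g n m = Nat.card {π : ColoredPerm ℓ n //
      ∀ i : Fin n, (π.2 i = i ∧ π.1 i = 0) → (i : ℕ) < m} := by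
  change g n m = Nat.card {π : ColoredPerm ℓ n // Good ℓ n m π}
  haveI : NeZero ℓ := ⟨by omega⟩
  have diag : ∀ n, g n n = Nat.card {π : ColoredPerm ℓ n // Good ℓ n n π} := by
    intro n
    rw [hg_diag, Nat.card_congr (Equiv.subtypeUnivEquiv fun π i _ => i.2)]
    simp [Nat.card_eq_fintype_card, Fintype.card_perm, ZMod.card]
  obtain ⟨k, rfl⟩ := Nat.exists_eq_add_of_le hmn
  clear hmn
  induction k generalizing m with
  | zero => exact diag m
  | succ k ih =>
    have h1 := ih (m + 1)
    have h2 := ih m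
    have h3 := card_rec ℓ (m + k) m hℓ (by omega)
    rw [show m + 1 + k = m + k + 1 by omega] at h1
    have h4 := hg_rec (m + k + 1) m (by omega)
    rw [Nat.add_sub_cancel] at h4
    change g (m + k + 1) m = Nat.card {π : ColoredPerm ℓ (m + k + 1) // Good ℓ (m + k + 1) m π}
    rw [h4, h1, h2, h3]
    push_cast
    ring
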